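/- arXiv:math/0511156 — 2 statements merged into one kernel-verified Lean document; each statement's English description precedes it below -/
import Mathlib

section
/- Let N ≥ 3, let V satisfy condition (V) and the decay condition that there exist A, α > 0 with V⁺(x) ≤ A|x|^{-2-α} for all x ∈ ℝ^N, let f satisfy conditions (f1), (f2), (f3), let λ > 0, and let u be a solution of problem (P_λ). Then the gradient of u is square-integrable: ∫_{ℝ^N} |∇u|² dx < ∞; consequently u ∈ H¹(ℝ^N). -/
open MeasureTheory Filter Metric Set
open scoped ENNReal NNReal Topology

noncomputable section

/-- Euclidean space `ℝ^N`. -/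
abbrev Euc (N : ℕ) := EuclideanSpace ℝ (Fin N)

/-- The Laplace operator on `ℝ^N`: the sum of the second partial derivatives. -/
def lap (N : ℕ) (u : Euc N → ℝ) (x : Euc N) : ℝ :=
  ∑ i : Fin N,
    fderiv ℝ (fun y => fderiv ℝ u y (EuclideanSpace.single i 1)) x (EuclideanSpace.single i 1)

/-- The principal eigenvalue `λ₁(R)`: the infimum of `∫_{B_R} |∇u|²` over smooth functions
compactly supported in the open ball `B_R` with `∫_{B_R} V u² = 1`. -/
def lam1 (N : ℕ) (V : Euc N → ℝ) (R : ℝ) : ℝ :=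
  sInf { t : ℝ | ∃ u : Euc N → ℝ, ContDiff ℝ (⊤ : ℕ∞) u ∧ HasCompactSupport u ∧
    tsupport u ⊆ ball (0 : Euc N) R ∧
    (∫ x, V x * u x ^ 2) = 1 ∧ t = ∫ x, ‖gradient u x‖ ^ 2 }

/-- `Λ := lim_{R → ∞} λ₁(R)`. -/
def Lam (N : ℕ) (V : Euc N → ℝ) : ℝ := limUnder atTop (lam1 N V)

/-- Condition (V): `V` is a bounded Hölder-continuous function whose positive part
`V⁺ = max(V, 0)` is nontrivial and decomposes as `V₁ + V₂` with `V₁ ∈ L^{N/2}` and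
`|x|² V₂(x) → 0` as `|x| → ∞`. -/
def CondV (N : ℕ) (V V₁ V₂ : Euc N → ℝ) : Prop :=
  (∃ C β : ℝ≥0, 0 < β ∧ β ≤ 1 ∧ HolderWith C β V) ∧
  (∃ C : ℝ, ∀ x, |V x| ≤ C) ∧
  (∃ x, 0 < V x) ∧
  (∀ x, max (V x) 0 = V₁ x + V₂ x) ∧
  MemLp V₁ ((N : ℝ≥0∞) / 2) volume ∧
  Tendsto (fun x : Euc N => ‖x‖ ^ 2 * V₂ x) (cocompact _) (𝓝 0)

/-- The decay condition: `V⁺(x) ≤ A |x|^{-2-α}`. -/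
def CondVDecay (N : ℕ) (V : Euc N → ℝ) : Prop :=
  ∃ A α : ℝ, 0 < A ∧ 0 < α ∧
    ∀ x : Euc N, x ≠ 0 → max (V x) 0 ≤ A * ‖x‖ ^ (-2 - α)

/-- Conditions (f1), (f2), (f3) on the absorption term `f`. -/
def CondF (N : ℕ) (V : Euc N → ℝ) (f : ℝ → ℝ) : Prop :=
  ContDiff ℝ 1 f ∧ (∀ u : ℝ, 0 ≤ u → 0 ≤ f u) ∧
  -- (f1)
  f 0 = 0 ∧ deriv f 0 = 0 ∧
  0 < Filter.liminf (fun u : ℝ => ((deriv f u / u : ℝ) : EReal)) (𝓝[>] (0 : ℝ)) ∧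
  -- (f2)
  StrictMonoOn (fun u : ℝ => f u / u) (Ioi 0) ∧
  -- (f3)
  (∃ L : EReal, Tendsto (fun u : ℝ => ((f u / u : ℝ) : EReal)) atTop (𝓝 L) ∧
    ((⨆ x, |V x| : ℝ) : EReal) < L)

/-- A solution of problem `(P_λ)`: a positive `C²` function solving the logistic equation
and decaying to zero at infinity. -/
structure IsSolution (N : ℕ) (V : Euc N → ℝ) (f : ℝ → ℝ) (lam : ℝ) (u : Euc N → ℝ) : Prop where
  smooth : ContDiff ℝ 2 u
  pos : ∀ x, 0 < u x
  eqn : ∀ x, -lap N u x = lam * (V x * u x - f (u x))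
  decay : Tendsto u (cocompact (Euc N)) (𝓝 0)

/-- The surface integral `∫_{∂B_R} g dσ` over the sphere of radius `R`, written in polar
coordinates with respect to the canonical surface measure on the unit sphere. -/
def sphereInt (N : ℕ) (g : Euc N → ℝ) (R : ℝ) : ℝ :=
  ∫ ω : sphere (0 : Euc N) 1, g (R • (ω : Euc N)) * R ^ (N - 1)
    ∂((volume : Measure (Euc N)).toSphere)


/-- partial derivative -/
def pd (N : ℕ) (i : Fin N) (w : Euc N → ℝ) (y : Euc N) : ℝ :=
  fderiv ℝ w y (EuclideanSpace.single i 1)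

lemma lap_eq (N : ℕ) (w : Euc N → ℝ) (x : Euc N) :
    lap N w x = ∑ i, pd N i (pd N i w) x := rfl

lemma pd_contDiff {N : ℕ} (i : Fin N) {w : Euc N → ℝ} {m n : WithTop ℕ∞} (hw : ContDiff ℝ n w)
    (h : m + 1 ≤ n) : ContDiff ℝ m (pd N i w) := by
  have := hw.fderiv_right h
  exact this.clm_apply contDiff_const

lemma pd_contDiffAt {N : ℕ} (i : Fin N) {w : Euc N → ℝ} {m n : WithTop ℕ∞} {x : Euc N}
    (hw : ContDiffAt ℝ n w x)
    (h : m + 1 ≤ n) : ContDiffAt ℝ m (pd N i w) x := by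
  have := hw.fderiv_right h
  exact this.clm_apply contDiffAt_const

lemma one_two : (1 : WithTop ℕ∞) + 1 ≤ 2 := by norm_num
lemma zero_one' : (0 : WithTop ℕ∞) + 1 ≤ 1 := by norm_num

lemma pd_hasCompactSupport {N : ℕ} (i : Fin N) {w : Euc N → ℝ} (hw : HasCompactSupport w) :
    HasCompactSupport (pd N i w) := hw.fderiv_apply ℝ _

lemma lap_continuous {N : ℕ} {w : Euc N → ℝ} (hw : ContDiff ℝ 2 w) : Continuous (lap N w) := by
  change Continuous (fun x => ∑ i, pd N i (pd N i w) x)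
  refine continuous_finsetSum _ fun i _ => ?_
  exact (pd_contDiff i (pd_contDiff i hw one_two) zero_one').continuous

lemma green_i {N : ℕ} (i : Fin N) {φ w : Euc N → ℝ} (hφ : ContDiff ℝ 1 φ)
    (hc : HasCompactSupport φ) (hw : ContDiff ℝ 1 w) :
    ∫ x, φ x * pd N i w x = - ∫ x, pd N i φ x * w x := by
  have h0 := (pd_contDiff i hφ zero_one').continuous
  have h1 := (pd_contDiff i hw zero_one').continuous
  apply integral_mul_fderiv_eq_neg_fderiv_mul_of_integrable
  · exact (h0.mul hw.continuous).integrable_of_hasCompactSupport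
      ((pd_hasCompactSupport i hc).mul_right)
  · exact (hφ.continuous.mul h1).integrable_of_hasCompactSupport hc.mul_right
  · exact (hφ.continuous.mul hw.continuous).integrable_of_hasCompactSupport hc.mul_right
  · exact fun x _ => (hφ.differentiable one_ne_zero) x
  · exact fun x _ => (hw.differentiable one_ne_zero) x

lemma green {N : ℕ} {φ w : Euc N → ℝ} (hφ : ContDiff ℝ 2 φ)
    (hc : HasCompactSupport φ) (hw : ContDiff ℝ 2 w) :
    ∫ x, φ x * lap N w x = ∫ x, lap N φ x * w x := by
  simp only [lap_eq, Finset.mul_sum, Finset.sum_mul]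
  rw [integral_finsetSum, integral_finsetSum]
  · refine Finset.sum_congr rfl fun i _ => ?_
    have hφ1 : ContDiff ℝ 1 φ := hφ.of_le (by norm_num)
    have hw1 : ContDiff ℝ 1 w := hw.of_le (by norm_num)
    rw [green_i i hφ1 hc (pd_contDiff i hw one_two),
      green_i i (pd_contDiff i hφ one_two) (pd_hasCompactSupport i hc) hw1, neg_neg]
  · intro i _
    exact ((pd_contDiff i (pd_contDiff i hφ one_two) zero_one').continuous.mul
      hw.continuous).integrable_of_hasCompactSupport
      ((pd_hasCompactSupport i (pd_hasCompactSupport i hc)).mul_right)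
  · intro i _
    exact (hφ.continuous.mul (pd_contDiff i
      (pd_contDiff i hw one_two) zero_one').continuous).integrable_of_hasCompactSupport
      hc.mul_right

lemma pd_mul {N : ℕ} (i : Fin N) {v w : Euc N → ℝ} {x : Euc N} (hv : DifferentiableAt ℝ v x)
    (hw : DifferentiableAt ℝ w x) :
    pd N i (fun y => v y * w y) x = v x * pd N i w x + w x * pd N i v x := by
  unfold pd
  rw [fderiv_fun_mul hv hw]; simp

lemma pd_add {N : ℕ} (i : Fin N) {v w : Euc N → ℝ} {x : Euc N} (hv : DifferentiableAt ℝ v x)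
    (hw : DifferentiableAt ℝ w x) :
    pd N i (fun y => v y + w y) x = pd N i v x + pd N i w x := by
  unfold pd
  rw [fderiv_fun_add hv hw]; simp

lemma lap_sq {N : ℕ} {w : Euc N → ℝ} (hw : ContDiff ℝ 2 w) (x : Euc N) :
    lap N (fun y => w y ^ 2) x = 2 * (w x * lap N w x) + 2 * ∑ i, pd N i w x ^ 2 := by
  simp only [lap_eq, Finset.mul_sum, ← Finset.sum_add_distrib]
  refine Finset.sum_congr rfl fun i _ => ?_
  have hd : Differentiable ℝ w := hw.differentiable (by norm_num)
  have hd' : Differentiable ℝ (pd N i w) :=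
    (pd_contDiff i hw one_two).differentiable (by norm_num)
  have : pd N i (fun y => w y ^ 2) = fun y => w y * pd N i w y + w y * pd N i w y := by
    ext y
    simp only [pow_two]
    exact pd_mul i (hd y) (hd y)
  rw [this, pd_add i ((hd x).fun_mul (hd' x)) ((hd x).fun_mul (hd' x)), pd_mul i (hd x) (hd' x)]
  ring

lemma norm_grad_sq {N : ℕ} (u : Euc N → ℝ) (x : Euc N) :
    ‖gradient u x‖ ^ 2 = ∑ i, pd N i u x ^ 2 := by
  rw [EuclideanSpace.norm_sq_eq]
  refine Finset.sum_congr rfl fun i _ => ?_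
  have : gradient u x i = pd N i u x := by
    unfold pd
    have h := InnerProductSpace.toDual_symm_apply (𝕜 := ℝ) (x := EuclideanSpace.single i (1:ℝ))
      (y := fderiv ℝ u x)
    rw [← h, EuclideanSpace.inner_single_right]
    simp [gradient]
  rw [this]; simp

/-- cutoffs -/
lemma cutoff (N : ℕ) : ∃ C : ℝ, 0 ≤ C ∧ ∀ R : ℝ, 1 ≤ R → ∃ η : Euc N → ℝ, ContDiff ℝ 2 η ∧
    (∀ x, 0 ≤ η x) ∧ (∀ x, η x ≤ 1) ∧ (∀ x, ‖x‖ ≤ R → η x = 1) ∧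
    (∀ x, 2 * R ≤ ‖x‖ → η x = 0) ∧
    (∀ x, |lap N (fun y => η y ^ 4) x| ≤ C / R ^ 2 * η x ^ 2) := by
  let b : ContDiffBump (0 : Euc N) := ⟨1, 2, one_pos, one_lt_two⟩
  have hb : ContDiff ℝ 2 (b : Euc N → ℝ) := b.contDiff
  have hbc : HasCompactSupport (b : Euc N → ℝ) := b.hasCompactSupport
  have hb2 : ContDiff ℝ 2 (fun x => b x ^ 2) := hb.pow 2
  have key : ∀ x, lap N (fun y => b y ^ 4) x =
      b x ^ 2 * (2 * lap N (fun y => b y ^ 2) x + 8 * ∑ i, pd N i b x ^ 2) := by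
    intro x
    have := lap_sq hb2 x
    simp only [← pow_mul] at this
    norm_num at this
    rw [this]
    have h2 : ∀ i, pd N i (fun y => b y ^ 2) x = 2 * (b x * pd N i b x) := by
      intro i
      have hd : Differentiable ℝ (b : Euc N → ℝ) := hb.differentiable (by norm_num)
      simp only [pow_two]
      rw [pd_mul i (hd x) (hd x)]; ring
    simp only [h2, mul_pow, ← Finset.mul_sum]
    ring
  have hc1 : ∀ i, Continuous (pd N i b) := fun i => (pd_contDiff i hb one_two).continuous
  obtain ⟨C, hC⟩ : ∃ C, ∀ x, ‖2 * lap N (fun y => b y ^ 2) x + 8 * ∑ i, pd N i b x ^ 2‖ ≤ C := by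
    apply HasCompactSupport.exists_bound_of_continuous
    · apply HasCompactSupport.add
      · apply HasCompactSupport.mul_left
        have h2 : HasCompactSupport (fun y => b y ^ 2) := by
          simp only [pow_two]; exact hbc.mul_left
        apply HasCompactSupport.intro h2
        intro x hx
        rw [lap_eq]
        refine Finset.sum_eq_zero fun i _ => ?_
        have := (tsupport_fderiv_apply_subset ℝ (f := fun y => b y ^ 2) (EuclideanSpace.single i 1))
        have h3 := (tsupport_fderiv_apply_subset ℝ (f := pd N i fun y => b y ^ 2)
          (EuclideanSpace.single i 1))
        exact image_eq_zero_of_notMem_tsupport (fun h => hx (this (h3 h)))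
      · apply HasCompactSupport.mul_left
        apply HasCompactSupport.intro hbc
        intro x hx
        refine Finset.sum_eq_zero fun i _ => ?_
        have := (tsupport_fderiv_apply_subset ℝ (f := b) (EuclideanSpace.single i 1))
        have h4 : pd N i b x = 0 := image_eq_zero_of_notMem_tsupport (fun h => hx (this h))
        rw [h4]; simp
    · have := lap_continuous hb2
      fun_prop
  refine ⟨C, (norm_nonneg _).trans (hC 0), fun R hR => ⟨fun x => b (R⁻¹ • x), ?_, ?_, ?_, ?_, ?_, ?_⟩⟩
  · exact hb.comp (contDiff_const_smul _)
  · exact fun x => b.nonneg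
  · exact fun x => b.le_one
  · intro x hx
    apply b.one_of_mem_closedBall
    simp only [mem_closedBall, dist_zero_right, norm_smul, norm_inv, Real.norm_eq_abs]
    rw [abs_of_pos (by linarith), inv_mul_le_iff₀ (by linarith)]
    change ‖x‖ ≤ R * 1
    linarith
  · intro x hx
    apply b.zero_of_le_dist
    simp only [dist_zero_right, norm_smul, norm_inv, Real.norm_eq_abs]
    rw [abs_of_pos (by linarith), le_inv_mul_iff₀ (by linarith)]
    change R * 2 ≤ ‖x‖
    linarith
  · intro x
    have hs : ∀ (i : Fin N) (w : Euc N → ℝ) (c : ℝ) , pd N i (fun y => w (c • y)) =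
        fun y => c * pd N i w (c • y) := by
      intro i w c
      ext y
      unfold pd
      rw [fderiv_comp_smul]; simp
    have hs' : lap N (fun y => b (R⁻¹ • y) ^ 4) x = R⁻¹ ^ 2 * lap N (fun y => b y ^ 4) (R⁻¹ • x) := by
      simp only [lap_eq, Finset.mul_sum]
      refine Finset.sum_congr rfl fun i _ => ?_
      rw [hs i (fun y => b y ^ 4)]
      have : pd N i (fun y => R⁻¹ * pd N i (fun y => b y ^ 4) (R⁻¹ • y)) x =
        R⁻¹ * pd N i (fun y => pd N i (fun y => b y ^ 4) (R⁻¹ • y)) x := by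
        unfold pd
        change fderiv ℝ (R⁻¹ • (fun y => fderiv ℝ (fun y => b y ^ 4) (R⁻¹ • y)
          (EuclideanSpace.single i 1))) x _ = _
        rw [fderiv_const_smul_field]; simp
      rw [this, hs]; ring
    rw [hs', key, abs_mul, abs_mul, abs_of_nonneg (by positivity), abs_of_nonneg (by positivity)]
    have := hC (R⁻¹ • x)
    rw [Real.norm_eq_abs] at this
    calc _ ≤ R⁻¹ ^ 2 * (b (R⁻¹ • x) ^ 2 * C) := by gcongr
      _ = _ := by field_simp

lemma pd_congr {N : ℕ} (i : Fin N) {v w : Euc N → ℝ} {x : Euc N} (h : v =ᶠ[𝓝 x] w) :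
    pd N i v =ᶠ[𝓝 x] pd N i w := by
  filter_upwards [h.fderiv (𝕜 := ℝ)] with y hy
  unfold pd; rw [hy]

lemma eventually_diff {N : ℕ} {w : Euc N → ℝ} {x : Euc N} (hw : ContDiffAt ℝ 2 w x) :
    ∀ᶠ y in 𝓝 x, DifferentiableAt ℝ w y := by
  filter_upwards [hw.eventually (by simp)] with y hy
  exact hy.differentiableAt (by norm_num)

lemma pd_lin {N : ℕ} (i : Fin N) {v w : Euc N → ℝ} {x : Euc N} (a b : ℝ)
    (hv : DifferentiableAt ℝ v x) (hw : DifferentiableAt ℝ w x) :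
    pd N i (fun y => a * v y + b * w y) x = a * pd N i v x + b * pd N i w x := by
  unfold pd
  have h := (hv.hasFDerivAt.const_mul a).add (hw.hasFDerivAt.const_mul b)
  have h2 : fderiv ℝ (fun y => a * v y + b * w y) x = _ := h.fderiv
  rw [h2]; simp

lemma lap_lin {N : ℕ} {v w : Euc N → ℝ} {x : Euc N} (a b : ℝ)
    (hv : ContDiffAt ℝ 2 v x) (hw : ContDiffAt ℝ 2 w x) :
    lap N (fun y => a * v y + b * w y) x = a * lap N v x + b * lap N w x := by
  simp only [lap_eq, Finset.mul_sum, ← Finset.sum_add_distrib]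
  refine Finset.sum_congr rfl fun i _ => ?_
  have : pd N i (fun y => a * v y + b * w y) =ᶠ[𝓝 x] fun y => a * pd N i v y + b * pd N i w y := by
    filter_upwards [eventually_diff hv, eventually_diff hw] with y h1 h2
    exact pd_lin i a b h1 h2
  rw [(pd_congr i this).eq_of_nhds]
  exact pd_lin i a b ((pd_contDiffAt i hv one_two).differentiableAt (by norm_num))
    ((pd_contDiffAt i hw one_two).differentiableAt (by norm_num))

lemma lap_nonneg_of_isLocalMin {N : ℕ} {w : Euc N → ℝ} {x : Euc N} (hw : ContDiffAt ℝ 2 w x)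
    (h : IsLocalMin w x) : 0 ≤ lap N w x := by
  rw [lap_eq]
  refine Finset.sum_nonneg fun i _ => ?_
  set e : Euc N := EuclideanSpace.single i 1 with he
  have hl : ∀ t : ℝ, HasDerivAt (fun t : ℝ => x + t • e) e t := by
    intro t
    simpa using ((hasDerivAt_id t).smul_const e).const_add x
  have hcont : Continuous (fun t : ℝ => x + t • e) := by fun_prop
  have htend : Tendsto (fun t : ℝ => x + t • e) (𝓝 0) (𝓝 x) := by
    have := hcont.tendsto 0
    simpa using this
  have hx0 : x + (0:ℝ) • e = x := by simp
  have hcomp : ∀ (g : Euc N → ℝ) (t : ℝ), DifferentiableAt ℝ g (x + t • e) →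
      HasDerivAt (fun t : ℝ => g (x + t • e)) (pd N i g (x + t • e)) t := by
    intro g t hg
    exact hg.hasFDerivAt.comp_hasDerivAt t (hl t)
  have hd1 : deriv (fun t : ℝ => w (x + t • e)) =ᶠ[𝓝 0] fun t => pd N i w (x + t • e) := by
    filter_upwards [htend.eventually (eventually_diff hw)] with t ht
    exact (hcomp w t ht).deriv
  have hpd : DifferentiableAt ℝ (pd N i w) (x + (0:ℝ) • e) := by
    rw [hx0]; exact (pd_contDiffAt i hw one_two).differentiableAt (by norm_num)
  have hd2 : deriv (deriv (fun t : ℝ => w (x + t • e))) 0 = pd N i (pd N i w) x := by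
    rw [hd1.deriv_eq, (hcomp _ 0 hpd).deriv, hx0]
  have hmin : IsLocalMin (fun t : ℝ => w (x + t • e)) 0 := by
    have := htend.eventually h
    simpa [IsLocalMin, IsMinFilter] using this
  by_contra hneg
  push Not at hneg
  rw [← hd2] at hneg
  have hcAt : ContinuousAt (fun t : ℝ => w (x + t • e)) 0 := by
    have h3 := hw.continuousAt.tendsto.comp htend
    change Tendsto _ _ (𝓝 (w (x + (0:ℝ) • e)))
    rw [hx0]
    exact h3
  have hmax := isLocalMax_of_deriv_deriv_neg hneg hmin.deriv_eq_zero
    hcAt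
  have hconst : (fun t : ℝ => w (x + t • e)) =ᶠ[𝓝 0] fun _ => w (x + (0:ℝ) • e) := by
    filter_upwards [hmin, hmax] with t h1 h2
    exact le_antisymm h2 h1
  have := hconst.deriv.deriv_eq
  simp at this
  rw [this] at hneg
  exact lt_irrefl _ hneg

lemma hasFDerivAt_norm_rpow' {N : ℕ} (q : ℝ) {x : Euc N} (hx : x ≠ 0) :
    HasFDerivAt (fun y : Euc N => ‖y‖ ^ q) ((q * ‖x‖ ^ (q - 2)) • innerSL ℝ x) x := by
  have h1 : HasFDerivAt (fun y : Euc N => ‖y‖ ^ 2) (2 • innerSL ℝ x) x :=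
    (hasStrictFDerivAt_norm_sq x).hasFDerivAt
  have hp : 0 < ‖x‖ := norm_pos_iff.2 hx
  have h2 := h1.rpow_const (p := q / 2) (Or.inl (by positivity))
  have e1 : (fun y : Euc N => (‖y‖ ^ 2) ^ (q / 2)) = fun y => ‖y‖ ^ q := by
    ext y
    rw [← Real.rpow_natCast, ← Real.rpow_mul (norm_nonneg _)]
    congr 1; push_cast; ring
  have e2 : (‖x‖ ^ 2) ^ (q / 2 - 1) = ‖x‖ ^ (q - 2) := by
    rw [← Real.rpow_natCast, ← Real.rpow_mul (norm_nonneg _)]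
    congr 1; push_cast; ring
  rw [e1, e2] at h2
  refine h2.congr_fderiv ?_
  ext y
  simp
  ring

lemma pd_norm_rpow {N : ℕ} (i : Fin N) (q : ℝ) {x : Euc N} (hx : x ≠ 0) :
    pd N i (fun y : Euc N => ‖y‖ ^ q) x = q * (‖x‖ ^ (q - 2) * x i) := by
  unfold pd
  rw [(hasFDerivAt_norm_rpow' q hx).fderiv]
  simp [EuclideanSpace.inner_single_right]
  try ring

lemma contDiffAt_norm_rpow {N : ℕ} (q : ℝ) {x : Euc N} (hx : x ≠ 0) :
    ContDiffAt ℝ 2 (fun y : Euc N => ‖y‖ ^ q) x :=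
  (contDiffAt_norm ℝ hx).rpow_const_of_ne (norm_ne_zero_iff.2 hx)

lemma lap_norm_rpow {N : ℕ} (q : ℝ) {x : Euc N} (hx : x ≠ 0) :
    lap N (fun y : Euc N => ‖y‖ ^ q) x = q * (N + q - 2) * ‖x‖ ^ (q - 2) := by
  have hp : 0 < ‖x‖ := norm_pos_iff.2 hx
  have hi : ∀ i, pd N i (pd N i (fun y : Euc N => ‖y‖ ^ q)) x =
      q * ‖x‖ ^ (q - 2) + q * (q - 2) * ‖x‖ ^ (q - 2 - 2) * ‖x i‖ ^ 2 := by
    intro i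
    have h1 : pd N i (fun y : Euc N => ‖y‖ ^ q) =ᶠ[𝓝 x]
        fun y => q * (‖y‖ ^ (q - 2) * y i) + 0 * (‖y‖ ^ (q - 2) * y i) := by
      filter_upwards [isOpen_ne.mem_nhds hx] with y hy
      rw [pd_norm_rpow i q hy]; ring
    have hd1 : DifferentiableAt ℝ (fun y : Euc N => ‖y‖ ^ (q - 2)) x :=
      (hasFDerivAt_norm_rpow' _ hx).differentiableAt
    have hd2 : HasFDerivAt (fun y : Euc N => y i) (EuclideanSpace.proj (𝕜 := ℝ) i) x :=
      (EuclideanSpace.proj (𝕜 := ℝ) i : Euc N →L[ℝ] ℝ).hasFDerivAt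
    have h2 : pd N i (fun y : Euc N => y i) x = 1 := by
      unfold pd; rw [hd2.fderiv]; simp
    rw [(pd_congr i h1).eq_of_nhds, pd_lin i q 0 (hd1.fun_mul hd2.differentiableAt)
      (hd1.fun_mul hd2.differentiableAt), pd_mul i hd1 hd2.differentiableAt, h2,
      pd_norm_rpow i _ hx]
    simp
    ring
  rw [lap_eq]
  simp only [hi, Finset.sum_add_distrib, ← Finset.mul_sum, ← EuclideanSpace.norm_sq_eq]
  have : ‖x‖ ^ (q - 2) = ‖x‖ ^ (q - 2 - 2) * ‖x‖ ^ 2 := by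
    rw [← Real.rpow_natCast, ← Real.rpow_add hp]; congr 1; push_cast; ring
  simp
  rw [this]
  ring

/-- Comparison principle outside a ball. -/
lemma comparison {N : ℕ} {u W q : Euc N → ℝ} {R η : ℝ} (hη : 0 < η)
    (hu : ContDiff ℝ 2 u) (hdec : Tendsto u (cocompact (Euc N)) (𝓝 0))
    (hW : ∀ x, R ≤ ‖x‖ → ContDiffAt ℝ 2 W x) (hWη : ∀ x, R ≤ ‖x‖ → η ≤ W x)
    (hbd : ∀ x, ‖x‖ = R → u x ≤ W x)
    (hus : ∀ x, R ≤ ‖x‖ → - lap N u x ≤ q x * u x)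
    (hWs : ∀ x, R ≤ ‖x‖ → lap N W x < - (q x * W x)) :
    ∀ x, R ≤ ‖x‖ → u x ≤ W x := by
  intro x hx
  by_contra hlt
  push Not at hlt
  have hWp : ∀ x, R ≤ ‖x‖ → 0 < W x := fun x hx => hη.trans_le (hWη x hx)
  have h1 : 1 < u x / W x := by rwa [one_lt_div (hWp x hx)]
  have hcl : IsClosed {y : Euc N | R ≤ ‖y‖} := isClosed_le continuous_const continuous_norm
  obtain ⟨z, hz, hmax⟩ : ∃ z ∈ {y : Euc N | R ≤ ‖y‖},
      IsMaxOn (fun y => u y / W y) {y : Euc N | R ≤ ‖y‖} z := by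
    refine ContinuousOn.exists_isMaxOn' ?_ hcl (x₀ := x) hx ?_
    · exact hu.continuous.continuousOn.div
        (fun y hy => (hW y hy).continuousAt.continuousWithinAt) (fun y hy => (hWp y hy).ne')
    · rw [eventually_inf_principal]
      filter_upwards [hdec.eventually (gt_mem_nhds hη)] with y hy hyR
      refine le_trans ?_ h1.le
      rw [div_le_one (hWp y hyR)]
      exact hy.le.trans (hWη y hyR)
  have hz' : R ≤ ‖z‖ := hz
  set t := u z / W z with ht
  have ht1 : 1 < t := h1.trans_le (hmax hx)
  have hzu : t * W z = u z := by rw [ht]; field_simp [(hWp z hz).ne']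
  have hzR : R < ‖z‖ := by
    refine lt_of_le_of_ne hz' fun h => ?_
    have := hbd z h.symm
    have h3 := hWp z hz
    nlinarith
  have hlm : IsLocalMin (fun y => t * W y + (-1) * u y) z := by
    filter_upwards [(isOpen_lt continuous_const continuous_norm).mem_nhds hzR] with y hy
    have hy' : R ≤ ‖y‖ := le_of_lt hy
    have := hmax hy'
    have h3 : u y / W y ≤ t := this
    rw [div_le_iff₀ (hWp y hy')] at h3
    linarith
  have hcd := hW z hz'
  have h4 := lap_nonneg_of_isLocalMin
    ((contDiffAt_const.mul hcd).add (contDiffAt_const.mul hu.contDiffAt)) hlm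
  rw [lap_lin t (-1) hcd hu.contDiffAt] at h4
  have h5 := hus z hz'
  have h6 := hWs z hz'
  rw [← hzu] at h5
  nlinarith

lemma integrable_of_decay {N : ℕ} {g : Euc N → ℝ} (hg : Continuous g) {p M R : ℝ} (hp : (N:ℝ) < p)
    (hR : 1 ≤ R) (h : ∀ x, R ≤ ‖x‖ → |g x| ≤ M * ‖x‖ ^ (-p)) : Integrable g := by
  have hInt : Integrable (fun x : Euc N => (1 + ‖x‖) ^ (-p)) :=
    integrable_one_add_norm (by simpa using hp)
  refine hg.locallyIntegrable.integrable_of_isBigO_cocompact (g := fun x : Euc N => (1 + ‖x‖) ^ (-p))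
    ?_ (hInt.integrableAtFilter _)
  refine Asymptotics.IsBigO.of_bound (|M| * 2 ^ p) ?_
  filter_upwards [(tendsto_norm_cocompact_atTop (E := Euc N)).eventually (eventually_ge_atTop R)]
    with x hx
  have hx1 : 1 ≤ ‖x‖ := hR.trans hx
  have hp0 : 0 < p := lt_of_le_of_lt (Nat.cast_nonneg _) hp
  rw [Real.norm_eq_abs, Real.norm_eq_abs,
    abs_of_nonneg (show (0:ℝ) ≤ (1 + ‖x‖) ^ (-p) by positivity)]
  have h1 : ‖x‖ ^ (-p) ≤ ((1 + ‖x‖) / 2) ^ (-p) :=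
    Real.rpow_le_rpow_of_nonpos (by positivity) (by linarith) (by linarith)
  have h2 : ((1 + ‖x‖) / 2) ^ (-p) = 2 ^ p * (1 + ‖x‖) ^ (-p) := by
    rw [Real.div_rpow (by positivity) (by norm_num), Real.rpow_neg (by norm_num : (0:ℝ) ≤ 2)]
    field_simp
  calc |g x| ≤ M * ‖x‖ ^ (-p) := h x hx
    _ ≤ |M| * ‖x‖ ^ (-p) := by gcongr; exact le_abs_self _
    _ ≤ |M| * (2 ^ p * (1 + ‖x‖) ^ (-p)) := by rw [← h2]; gcongr
    _ = _ := by ring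

lemma integrable_of_cutoff {N : ℕ} {g : Euc N → ℝ} (hg : Continuous g) (h0 : ∀ x, 0 ≤ g x) (K : ℝ)
    (h : ∀ R : ℝ, 1 ≤ R → ∃ φ : Euc N → ℝ, Continuous φ ∧ HasCompactSupport φ ∧ (∀ x, 0 ≤ φ x) ∧
      (∀ x, ‖x‖ ≤ R → φ x = 1) ∧ ∫ x, φ x * g x ≤ K) : Integrable g := by
  have hcov : AECover (volume : Measure (Euc N)) atTop (fun n : ℕ => closedBall (0 : Euc N) (n:ℝ)) :=
    aecover_closedBall tendsto_natCast_atTop_atTop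
  refine hcov.integrable_of_integral_bounded_of_nonneg_ae K
    (fun n => hg.continuousOn.integrableOn_compact (isCompact_closedBall _ _))
    (Eventually.of_forall h0) ?_
  filter_upwards [eventually_ge_atTop 1] with n hn
  obtain ⟨φ, hφ, hc, hp, h1, hK⟩ := h n (by exact_mod_cast hn)
  refine le_trans ?_ hK
  have hi : Integrable (fun x => φ x * g x) :=
    (hφ.mul hg).integrable_of_hasCompactSupport hc.mul_right
  calc ∫ x in closedBall (0 : Euc N) (n:ℝ), g x = ∫ x in closedBall (0 : Euc N) (n:ℝ), φ x * g x := by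
        refine setIntegral_congr_fun measurableSet_closedBall fun x hx => ?_
        simp only [mem_closedBall, dist_zero_right] at hx
        simp [h1 x hx]
    _ ≤ _ := setIntegral_le_integral hi
        (Eventually.of_forall fun x => mul_nonneg (hp x) (h0 x))

lemma decay_est {N : ℕ} (hN : 5 ≤ N) {u : Euc N → ℝ} {K a B : ℝ} (hK : 0 < K) (ha : 0 < a)
    (ha1 : a ≤ 1) (hB : 0 < B) (huB : ∀ x, u x ≤ B)
    (hu : ContDiff ℝ 2 u) (hdec : Tendsto u (cocompact (Euc N)) (𝓝 0))
    (hus : ∀ x, 1 ≤ ‖x‖ → - lap N u x ≤ (K * ‖x‖ ^ (-2 - a)) * u x) :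
    ∃ M R : ℝ, 1 ≤ R ∧ 0 < M ∧ ∀ x, R ≤ ‖x‖ → u x ≤ M * ‖x‖ ^ (-((N:ℝ) / 2 + 1 / 4)) := by
  have hN' : (5:ℝ) ≤ N := by exact_mod_cast hN
  set s : ℝ := (N:ℝ) / 2 + 1 / 4 with hs
  set δ : ℝ := a / 2 with hδ
  have hs1 : 0 < s * (N - 2 - s) := mul_pos (by linarith) (by linarith)
  have hd1 : 0 < δ * (N - 2 - δ) := mul_pos (by linarith) (by linarith)
  have t1 : Tendsto (fun r : ℝ => K * r ^ (-a)) atTop (𝓝 0) := by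
    simpa using (tendsto_rpow_neg_atTop ha).const_mul K
  have t2 : Tendsto (fun r : ℝ => (2 * K) * r ^ (-δ)) atTop (𝓝 0) := by
    simpa using (tendsto_rpow_neg_atTop (show 0 < δ by linarith)).const_mul (2 * K)
  obtain ⟨R, hR⟩ := eventually_atTop.1 ((t1.eventually (gt_mem_nhds hs1)).and
    ((t2.eventually (gt_mem_nhds hd1)).and (eventually_ge_atTop 1)))
  have hR1 : 1 ≤ R := (hR R le_rfl).2.2
  have hR0 : 0 < R := by linarith
  refine ⟨B * R ^ s, R, hR1, by positivity, fun x hx => ?_⟩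
  set M := B * R ^ s with hM
  have hM0 : 0 < M := by positivity
  apply le_of_forall_pos_le_add
  intro ε hε
  set η := ε / 2 with hη
  have hη0 : 0 < η := by positivity
  have hne : ∀ x : Euc N, R ≤ ‖x‖ → x ≠ 0 := fun x hx => norm_pos_iff.1 (hR0.trans_le hx)
  let P : Euc N → ℝ := fun y => 1 * ‖y‖ ^ (-δ) + 1 * ‖y‖ ^ (0:ℝ)
  let W : Euc N → ℝ := fun y => M * ‖y‖ ^ (-s) + η * P y
  have hPc : ∀ x, R ≤ ‖x‖ → ContDiffAt ℝ 2 P x := fun x hx =>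
    (contDiffAt_const.mul (contDiffAt_norm_rpow _ (hne x hx))).add
      (contDiffAt_const.mul (contDiffAt_norm_rpow _ (hne x hx)))
  have hWc : ∀ x, R ≤ ‖x‖ → ContDiffAt ℝ 2 W x := fun x hx =>
    (contDiffAt_const.mul (contDiffAt_norm_rpow _ (hne x hx))).add
      (contDiffAt_const.mul (hPc x hx))
  have hP1 : ∀ x, P x = ‖x‖ ^ (-δ) + 1 := by intro x; simp [P]
  have hcmp := comparison (u := u) (W := W) (q := fun x => K * ‖x‖ ^ (-2 - a)) hη0 hu hdec hWc
    (by
      intro x hx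
      have h1 : 0 ≤ M * ‖x‖ ^ (-s) := by positivity
      have h2 : 0 ≤ η * ‖x‖ ^ (-δ) := by positivity
      simp only [W, hP1]; linarith)
    (by
      intro x hx
      have h1 : M * ‖x‖ ^ (-s) = B := by
        rw [hx, hM, mul_assoc, ← Real.rpow_add hR0]; simp
      have h2 : 0 ≤ η * ‖x‖ ^ (-δ) := by positivity
      have := huB x
      simp only [W, hP1]; linarith)
    (fun x hx => hus x (hR1.trans hx))
    (by
      intro x hx
      have hx0 : 0 < ‖x‖ := hR0.trans_le hx
      have hx1 : 1 ≤ ‖x‖ := hR1.trans hx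
      have e1 : lap N W x = M * (-s * (N + -s - 2) * ‖x‖ ^ (-s - 2)) +
          η * (-δ * (N + -δ - 2) * ‖x‖ ^ (-δ - 2)) := by
        change lap N (fun y => M * ‖y‖ ^ (-s) + η * P y) x = _
        rw [lap_lin M η (contDiffAt_norm_rpow _ (hne x hx)) (hPc x hx), lap_norm_rpow _ (hne x hx)]
        change _ + η * lap N (fun y => 1 * ‖y‖ ^ (-δ) + 1 * ‖y‖ ^ (0:ℝ)) x = _
        rw [lap_lin 1 1 (contDiffAt_norm_rpow _ (hne x hx)) (contDiffAt_norm_rpow _ (hne x hx)),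
          lap_norm_rpow _ (hne x hx), lap_norm_rpow _ (hne x hx)]
        ring
      obtain ⟨g1, g2, -⟩ := hR ‖x‖ hx
      have k1 : K * ‖x‖ ^ (-2 - a) * ‖x‖ ^ (-s) < s * (N - 2 - s) * ‖x‖ ^ (-s - 2) := by
        have : K * ‖x‖ ^ (-2 - a) * ‖x‖ ^ (-s) = K * ‖x‖ ^ (-a) * ‖x‖ ^ (-s - 2) := by
          rw [mul_assoc, mul_assoc, ← Real.rpow_add hx0, ← Real.rpow_add hx0]
          congr 2; ring
        rw [this]; gcongr
      have k2 : K * ‖x‖ ^ (-2 - a) * (‖x‖ ^ (-δ) + 1) < δ * (N - 2 - δ) * ‖x‖ ^ (-δ - 2) := by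
        have l1 : ‖x‖ ^ (-δ) ≤ 1 := Real.rpow_le_one_of_one_le_of_nonpos hx1 (by linarith)
        have : K * ‖x‖ ^ (-2 - a) * (1 + 1) = 2 * K * ‖x‖ ^ (-δ) * ‖x‖ ^ (-δ - 2) := by
          rw [mul_assoc (2 * K), ← Real.rpow_add hx0, show -δ + (-δ - 2) = -2 - a by rw [hδ]; ring]
          ring
        calc _ ≤ K * ‖x‖ ^ (-2 - a) * (1 + 1) := by gcongr
          _ < _ := by rw [this]; gcongr
      rw [e1]
      simp only [W, hP1]
      have m1 := mul_lt_mul_of_pos_left k1 hM0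
      have m2 := mul_lt_mul_of_pos_left k2 hη0
      nlinarith)
  have h1 := hcmp x hx
  have l1 : ‖x‖ ^ (-δ) ≤ 1 := Real.rpow_le_one_of_one_le_of_nonpos (hR1.trans hx) (by linarith)
  simp only [W, hP1] at h1
  nlinarith

lemma f_lower {N : ℕ} {V : Euc N → ℝ} {f : ℝ → ℝ} (hf : CondF N V f) (B : ℝ) (hB : 0 < B) :
    ∃ c : ℝ, 0 < c ∧ ∀ t, 0 < t → t ≤ B → c * t ^ 2 ≤ f t := by
  obtain ⟨hC, hnn, hf0, hf0', hlim, hmono, -⟩ := hf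
  obtain ⟨c, hc0, hc⟩ := EReal.lt_iff_exists_real_btwn.1 hlim
  have hc0 : 0 < c := by exact_mod_cast hc0
  have hev := eventually_lt_of_lt_liminf hc
  obtain ⟨d, hd, hdd⟩ := mem_nhdsGT_iff_exists_Ioc_subset.1 hev
  have hd0 : (0:ℝ) < d := hd
  have hfd : Differentiable ℝ f := hC.differentiable one_ne_zero
  have hmon : MonotoneOn (fun t => f t - c / 2 * t ^ 2) (Icc 0 d) := by
    refine monotoneOn_of_deriv_nonneg (convex_Icc _ _)
      (hfd.continuous.sub (by fun_prop)).continuousOn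
      (hfd.sub (by fun_prop)).differentiableOn ?_
    intro t ht
    rw [interior_Icc] at ht
    have h1 : (c : EReal) < ((deriv f t / t : ℝ) : EReal) := hdd ⟨ht.1, ht.2.le⟩
    have h1 : c < deriv f t / t := by exact_mod_cast h1
    rw [lt_div_iff₀ ht.1] at h1
    have h2 : HasDerivAt (fun t => f t - c / 2 * t ^ 2) (deriv f t - c / 2 * (2 * t)) t := by
      have := (hfd t).hasDerivAt.fun_sub ((hasDerivAt_pow 2 t).const_mul (c / 2))
      simpa using this
    rw [h2.deriv]; linarith
  have hsmall : ∀ t, 0 < t → t ≤ d → c / 2 * t ^ 2 ≤ f t := by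
    intro t h0 h1
    have := hmon ⟨le_rfl, hd0.le⟩ ⟨h0.le, h1⟩ h0.le
    simp [hf0] at this
    linarith
  refine ⟨min (c / 2) (c / 2 * d / B), by positivity, fun t ht htB => ?_⟩
  rcases le_total t d with h | h
  · refine le_trans ?_ (hsmall t ht h)
    gcongr; exact min_le_left _ _
  · have h1 : f d / d ≤ f t / t := hmono.monotoneOn hd0 ht h
    have h2 := hsmall d hd0 le_rfl
    have h3 : c / 2 * d ≤ f d / d := by rw [le_div_iff₀ hd0]; linarith
    have h4 : c / 2 * d ≤ f t / t := h3.trans h1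
    rw [le_div_iff₀ ht] at h4
    refine le_trans ?_ h4
    calc min (c / 2) (c / 2 * d / B) * t ^ 2 ≤ (c / 2 * d / B) * t ^ 2 := by
          gcongr; exact min_le_right _ _
      _ = c / 2 * d * t * (t / B) := by field_simp
      _ ≤ c / 2 * d * t * 1 := by
          gcongr; rwa [div_le_one hB]
      _ = _ := by ring

lemma sq_int_low {N : ℕ} (hN : N ≤ 4) {u Vp F : Euc N → ℝ} {lam c : ℝ} (hlam : 0 < lam) (hc : 0 < c)
    (hu : ContDiff ℝ 2 u) (hup : ∀ x, 0 < u x)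
    (hVi : Integrable (fun x => Vp x ^ 2))
    (hF : ∀ x, c * u x ^ 2 ≤ F x) (heq : ∀ x, - lap N u x ≤ lam * (Vp x * u x - F x)) :
    Integrable (fun x => u x ^ 2) := by
  obtain ⟨C, hC0, hcut⟩ := cutoff N
  set κ : ℝ := (volume : Measure (Euc N)).real (ball 0 1) with hκ
  have hκ0 : 0 ≤ κ := measureReal_nonneg
  have huc : Continuous u := hu.continuous
  refine integrable_of_cutoff (huc.pow 2) (fun x => sq_nonneg _)
    ((2 / (lam * c)) * (C ^ 2 / (lam * c) * (16 * κ) + lam / c * ∫ x, Vp x ^ 2)) ?_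
  intro R hR
  have hR0 : 0 < R := by linarith
  obtain ⟨η, hη, h0, h1, hone, hzero, hlap⟩ := hcut R hR
  have hcs : HasCompactSupport (fun x => η x ^ 4) := by
    refine HasCompactSupport.intro (isCompact_closedBall (0 : Euc N) (2 * R)) ?_
    intro x hx
    simp only [mem_closedBall, dist_zero_right, not_le] at hx
    simp [hzero x hx.le]
  have hφ : ContDiff ℝ 2 (fun x => η x ^ 4) := hη.pow 4
  refine ⟨fun x => η x ^ 4, hφ.continuous, hcs, fun x => by positivity, fun x hx => by
    simp [hone x hx], ?_⟩
  have hg := green hφ hcs hu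
  have i1 : Integrable (fun x => η x ^ 4 * lap N u x) :=
    (hφ.continuous.mul (lap_continuous hu)).integrable_of_hasCompactSupport hcs.mul_right
  have hz : ∀ x, 2 * R < ‖x‖ → lap N (fun y => η y ^ 4) x = 0 := by
    intro x hx
    have := hlap x
    rw [hzero x hx.le] at this
    simpa using this
  have i2 : Integrable (fun x => lap N (fun y => η y ^ 4) x * u x) := by
    refine ((lap_continuous hφ).mul huc).integrable_of_hasCompactSupport ?_
    refine HasCompactSupport.intro (isCompact_closedBall (0 : Euc N) (2 * R)) ?_
    intro x hx
    simp only [mem_closedBall, dist_zero_right, not_le] at hx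
    simp [hz x hx]
  have i3 : Integrable ((closedBall (0 : Euc N) (2 * R)).indicator
      (fun _ => C ^ 2 / (lam * c * R ^ 4))) := by
    rw [integrable_indicator_iff measurableSet_closedBall]
    exact integrableOn_const (isCompact_closedBall _ _).measure_lt_top.ne
  have i4 : Integrable (fun x => lam / c * Vp x ^ 2) := hVi.const_mul _
  have i5 : Integrable (fun x => η x ^ 4 * u x ^ 2) :=
    (hφ.continuous.mul (huc.pow 2)).integrable_of_hasCompactSupport hcs.mul_right
  have hpt : ∀ x, lam * c / 2 * (η x ^ 4 * u x ^ 2) ≤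
      (η x ^ 4 * lap N u x - lap N (fun y => η y ^ 4) x * u x) +
      ((closedBall (0 : Euc N) (2 * R)).indicator (fun _ => C ^ 2 / (lam * c * R ^ 4)) x
        + lam / c * Vp x ^ 2) := by
    intro x
    have a1 : lap N (fun y => η y ^ 4) x * u x ≤ lam * c / 4 * (η x ^ 4 * u x ^ 2) +
        (closedBall (0 : Euc N) (2 * R)).indicator (fun _ => C ^ 2 / (lam * c * R ^ 4)) x := by
      by_cases hx : x ∈ closedBall (0 : Euc N) (2 * R)
      · rw [indicator_of_mem hx]
        have b1 : lap N (fun y => η y ^ 4) x * u x ≤ (C / R ^ 2 * η x ^ 2) * u x :=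
          mul_le_mul_of_nonneg_right ((le_abs_self _).trans (hlap x)) (hup x).le
        refine b1.trans ?_
        have b2 : lam * c / 4 * (η x ^ 4 * u x ^ 2) + C ^ 2 / (lam * c * R ^ 4)
            - (C / R ^ 2 * η x ^ 2) * u x =
            lam * c / 4 * (η x ^ 2 * u x - 2 * C / (lam * c * R ^ 2)) ^ 2 := by
          field_simp; ring
        have b3 : 0 ≤ lam * c / 4 * (η x ^ 2 * u x - 2 * C / (lam * c * R ^ 2)) ^ 2 := by positivity
        linarith
      · rw [indicator_of_notMem hx]
        simp only [mem_closedBall, dist_zero_right, not_le] at hx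
        rw [hz x hx]
        have : 0 ≤ lam * c / 4 * (η x ^ 4 * u x ^ 2) := by positivity
        linarith
    have hη4 : η x ^ 4 ≤ 1 := pow_le_one₀ (h0 x) (h1 x)
    have hη0 : 0 ≤ η x ^ 4 := by positivity
    have a2 : lam * (Vp x * u x) ≤ lam * c / 4 * u x ^ 2 + lam / c * Vp x ^ 2 := by
      have b2 : lam * c / 4 * u x ^ 2 + lam / c * Vp x ^ 2 - lam * (Vp x * u x) =
          lam * c / 4 * (u x - 2 / c * Vp x) ^ 2 := by field_simp; ring
      have : 0 ≤ lam * c / 4 * (u x - 2 / c * Vp x) ^ 2 := by positivity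
      linarith
    have a3 : lam * c * u x ^ 2 ≤ lam * F x := by
      have := mul_le_mul_of_nonneg_left (hF x) hlam.le; linarith
    have a4 : 3 / 4 * (lam * c) * u x ^ 2 - lam / c * Vp x ^ 2 ≤ lap N u x := by
      have := heq x; linarith
    have a5 := mul_le_mul_of_nonneg_left a4 hη0
    have a6 : η x ^ 4 * (lam / c * Vp x ^ 2) ≤ lam / c * Vp x ^ 2 :=
      mul_le_of_le_one_left (by positivity) hη4
    linarith
  have hInt := integral_mono (i5.const_mul (lam * c / 2)) ((i1.sub i2).add (i3.add i4)) hpt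
  have e1 : ∫ x, ((η x ^ 4 * lap N u x - lap N (fun y => η y ^ 4) x * u x) +
      ((closedBall (0 : Euc N) (2 * R)).indicator (fun _ => C ^ 2 / (lam * c * R ^ 4)) x
        + lam / c * Vp x ^ 2)) = ((2 * R) ^ N * κ) * (C ^ 2 / (lam * c * R ^ 4)) +
        lam / c * ∫ x, Vp x ^ 2 := by
    have j1 : Integrable (fun x => η x ^ 4 * lap N u x - lap N (fun y => η y ^ 4) x * u x) :=
      i1.sub i2
    have j2 : Integrable (fun x => (closedBall (0 : Euc N) (2 * R)).indicator
        (fun _ => C ^ 2 / (lam * c * R ^ 4)) x + lam / c * Vp x ^ 2) := i3.add i4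
    rw [integral_add j1 j2, integral_sub i1 i2, hg, sub_self, zero_add,
      integral_add i3 i4, integral_const_mul, integral_indicator measurableSet_closedBall,
      setIntegral_const, Measure.addHaar_real_closedBall _ _ (by positivity)]
    simp [hκ]
  have e2 : ((2 * R) ^ N * κ) * (C ^ 2 / (lam * c * R ^ 4)) ≤ C ^ 2 / (lam * c) * (16 * κ) := by
    have : (2 * R) ^ N ≤ (2 * R) ^ 4 := pow_le_pow_right₀ (by linarith) hN
    calc _ ≤ ((2 * R) ^ 4 * κ) * (C ^ 2 / (lam * c * R ^ 4)) := by gcongr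
      _ = _ := by field_simp; ring
  rw [integral_const_mul] at hInt
  have e3 : lam * c / 2 * ∫ x, η x ^ 4 * u x ^ 2 ≤
      C ^ 2 / (lam * c) * (16 * κ) + lam / c * ∫ x, Vp x ^ 2 := by
    refine hInt.trans (le_trans (le_of_eq e1) ?_)
    linarith
  calc _ = 2 / (lam * c) * (lam * c / 2 * ∫ x, η x ^ 4 * u x ^ 2) := by field_simp
    _ ≤ _ := by gcongr

lemma grad_int {N : ℕ} {u : Euc N → ℝ} {K : ℝ} (hK : 0 ≤ K) (hu : ContDiff ℝ 2 u)
    (hup : ∀ x, 0 < u x) (hi : Integrable (fun x => u x ^ 2))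
    (heq : ∀ x, - lap N u x ≤ K * u x) :
    Integrable (fun x => ∑ i, pd N i u x ^ 2) := by
  obtain ⟨C, hC0, hcut⟩ := cutoff N
  have huc : Continuous u := hu.continuous
  have hSc : Continuous (fun x => ∑ i, pd N i u x ^ 2) :=
    continuous_finsetSum _ fun i _ => (pd_contDiff i hu one_two).continuous.pow 2
  refine integrable_of_cutoff hSc (fun x => Finset.sum_nonneg fun i _ => sq_nonneg _)
    ((C / 2 + K) * ∫ x, u x ^ 2) ?_
  intro R hR
  have hR0 : 0 < R := by linarith
  obtain ⟨η, hη, h0, h1, hone, hzero, hlap⟩ := hcut R hR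
  have hcs : HasCompactSupport (fun x => η x ^ 4) := by
    refine HasCompactSupport.intro (isCompact_closedBall (0 : Euc N) (2 * R)) ?_
    intro x hx
    simp only [mem_closedBall, dist_zero_right, not_le] at hx
    simp [hzero x hx.le]
  have hφ : ContDiff ℝ 2 (fun x => η x ^ 4) := hη.pow 4
  have hu2 : ContDiff ℝ 2 (fun x => u x ^ 2) := hu.pow 2
  refine ⟨fun x => η x ^ 4, hφ.continuous, hcs, fun x => by positivity, fun x hx => by
    simp [hone x hx], ?_⟩
  have hg := green hφ hcs hu2
  have i1 : Integrable (fun x => η x ^ 4 * lap N (fun y => u y ^ 2) x) :=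
    (hφ.continuous.mul (lap_continuous hu2)).integrable_of_hasCompactSupport hcs.mul_right
  have i2 : Integrable (fun x => lap N (fun y => η y ^ 4) x * u x ^ 2) := by
    refine ((lap_continuous hφ).mul hu2.continuous).integrable_of_hasCompactSupport ?_
    refine HasCompactSupport.intro (isCompact_closedBall (0 : Euc N) (2 * R)) ?_
    intro x hx
    simp only [mem_closedBall, dist_zero_right, not_le] at hx
    have := hlap x
    rw [hzero x hx.le] at this
    have : lap N (fun y => η y ^ 4) x = 0 := by simpa using this
    simp [this]
  have i5 : Integrable (fun x => η x ^ 4 * ∑ i, pd N i u x ^ 2) :=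
    (hφ.continuous.mul hSc).integrable_of_hasCompactSupport hcs.mul_right
  have hpt : ∀ x, η x ^ 4 * ∑ i, pd N i u x ^ 2 ≤
      1 / 2 * (η x ^ 4 * lap N (fun y => u y ^ 2) x - lap N (fun y => η y ^ 4) x * u x ^ 2) +
      (C / 2 + K) * u x ^ 2 := by
    intro x
    have hη4 : η x ^ 4 ≤ 1 := pow_le_one₀ (h0 x) (h1 x)
    have hη0 : 0 ≤ η x ^ 4 := by positivity
    rw [lap_sq hu x]
    have b0 : lap N (fun y => η y ^ 4) x ≤ C := by
      refine (le_abs_self _).trans ((hlap x).trans ?_)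
      have c1 : C / R ^ 2 ≤ C := div_le_self hC0 (one_le_pow₀ hR)
      have c2 : η x ^ 2 ≤ 1 := pow_le_one₀ (h0 x) (h1 x)
      calc C / R ^ 2 * η x ^ 2 ≤ C / R ^ 2 * 1 := by gcongr
        _ ≤ C := by linarith
    have b1 : lap N (fun y => η y ^ 4) x * u x ^ 2 ≤ C * u x ^ 2 := by gcongr
    have b2 : - (u x * lap N u x) ≤ K * u x ^ 2 := by
      have := mul_le_mul_of_nonneg_left (heq x) (hup x).le
      linarith
    have b3 := mul_le_mul_of_nonneg_left b2 hη0
    have b4 : η x ^ 4 * (K * u x ^ 2) ≤ K * u x ^ 2 := mul_le_of_le_one_left (by positivity) hη4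
    linarith
  have hInt := integral_mono i5 (((i1.sub i2).const_mul (1 / 2)).add (hi.const_mul (C / 2 + K))) hpt
  refine hInt.trans (le_of_eq ?_)
  change ∫ x, (1 / 2 * (η x ^ 4 * lap N (fun y => u y ^ 2) x -
    lap N (fun y => η y ^ 4) x * u x ^ 2) + (C / 2 + K) * u x ^ 2) = _
  have j1 : Integrable (fun x => η x ^ 4 * lap N (fun y => u y ^ 2) x -
    lap N (fun y => η y ^ 4) x * u x ^ 2) := i1.sub i2
  rw [integral_add (j1.const_mul (1 / 2)) (hi.const_mul (C / 2 + K)), integral_const_mul,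
    integral_const_mul, integral_sub i1 i2, hg]
  simp

/-- any solution `u` of `(P_λ)` has square-integrable gradient; together with
square-integrability of `u`, this means `u ∈ H¹(ℝ^N)`. -/
theorem stmt11 (N : ℕ) (hN : 3 ≤ N) (V V₁ V₂ : Euc N → ℝ)
    (hV : CondV N V V₁ V₂) (hdec : CondVDecay N V)
    (f : ℝ → ℝ) (hf : CondF N V f)
    (lam : ℝ) (hlam : 0 < lam)
    (u : Euc N → ℝ) (hu : IsSolution N V f lam u) :
    Integrable (fun x : Euc N => ‖gradient u x‖ ^ 2) ∧
    Integrable (fun x : Euc N => u x ^ 2) := by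
  obtain ⟨⟨C1, β, hβ, -, hH⟩, ⟨CV, hCV⟩, -, -, -, -⟩ := hV
  obtain ⟨A, α, hA, hα, hAα⟩ := hdec
  have hVc : Continuous V := hH.continuous hβ
  obtain ⟨hsm, hpos, heq, hdecay⟩ := hu
  have hCV0 : 0 ≤ CV := (abs_nonneg _).trans (hCV 0)
  have hfn : ∀ x, 0 ≤ f (u x) := fun x => hf.2.1 _ (hpos x).le
  -- u is bounded
  obtain ⟨B, hB, huB⟩ : ∃ B : ℝ, 0 < B ∧ ∀ x, u x ≤ B := by
    obtain ⟨z, hz⟩ := hsm.continuous.exists_forall_ge' (0 : Euc N)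
      ((hdecay.eventually (gt_mem_nhds (hpos 0))).mono fun _ h => h.le)
    exact ⟨u z, hpos z, hz⟩
  have hup : ∀ x, - lap N u x ≤ lam * (max (V x) 0 * u x - f (u x)) := by
    intro x
    rw [heq x]
    have := mul_le_mul_of_nonneg_right (le_max_left (V x) 0) (hpos x).le
    gcongr
  have hsq : Integrable (fun x : Euc N => u x ^ 2) := by
    rcases le_or_gt N 4 with h4 | h5
    · obtain ⟨c, hc, hfc⟩ := f_lower hf B hB
      refine sq_int_low h4 hlam hc hsm hpos (Vp := fun x => max (V x) 0) ?_
        (fun x => hfc _ (hpos x) (huB x)) hup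
      have h4' : (N:ℝ) ≤ 4 := by exact_mod_cast h4
      refine integrable_of_decay (p := 4 + 2 * α) (M := A ^ 2) (R := 1)
        ((hVc.max continuous_const).pow 2) (by linarith) le_rfl ?_
      intro x hx
      have hx0 : 0 < ‖x‖ := by linarith
      have h1 := hAα x (norm_pos_iff.1 hx0)
      rw [abs_of_nonneg (by positivity)]
      calc max (V x) 0 ^ 2 ≤ (A * ‖x‖ ^ (-2 - α)) ^ 2 := by gcongr
        _ = A ^ 2 * ‖x‖ ^ (-(4 + 2 * α)) := by
          rw [mul_pow, ← Real.rpow_natCast (‖x‖ ^ (-2 - α)), ← Real.rpow_mul hx0.le]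
          congr 2; push_cast; ring
    · have hmin : 0 < min α 1 := by positivity
      obtain ⟨M, R, hR, hM, hdec⟩ := decay_est (K := lam * A) (a := min α 1) h5 (by positivity) hmin
        (min_le_right _ _) hB huB hsm hdecay (by
          intro x hx
          have hx0 : 0 < ‖x‖ := by linarith
          have h1 := hAα x (norm_pos_iff.1 hx0)
          have h2 : ‖x‖ ^ (-2 - α) ≤ ‖x‖ ^ (-2 - min α 1) :=
            Real.rpow_le_rpow_of_exponent_le hx (by linarith [min_le_left α 1])
          have h3 : max (V x) 0 ≤ A * ‖x‖ ^ (-2 - min α 1) := h1.trans (by gcongr)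
          have h4 := mul_le_mul_of_nonneg_right h3 (hpos x).le
          have h5 := mul_le_mul_of_nonneg_left h4 hlam.le
          have h6 := mul_nonneg hlam.le (hfn x)
          have := hup x
          linarith)
      refine integrable_of_decay (p := N + 1 / 2) (M := M ^ 2) (R := R)
        (hsm.continuous.pow 2) (by linarith) hR ?_
      intro x hx
      have hx0 : 0 < ‖x‖ := by linarith
      have h0 := (hpos x).le
      rw [abs_of_nonneg (by positivity)]
      calc u x ^ 2 ≤ (M * ‖x‖ ^ (-((N:ℝ) / 2 + 1 / 4))) ^ 2 := by
            have := hdec x hx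
            gcongr
        _ = M ^ 2 * ‖x‖ ^ (-((N:ℝ) + 1 / 2)) := by
          rw [mul_pow, ← Real.rpow_natCast (‖x‖ ^ (-((N:ℝ) / 2 + 1 / 4))), ← Real.rpow_mul hx0.le]
          congr 2; push_cast; ring
  refine ⟨?_, hsq⟩
  simp only [norm_grad_sq]
  refine grad_int (K := lam * CV) (by positivity) hsm hpos hsq ?_
  intro x
  rw [heq x, mul_assoc]
  have h1 : V x * u x ≤ CV * u x :=
    mul_le_mul_of_nonneg_right ((le_abs_self _).trans (hCV x)) (hpos x).le
  have := hfn x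
  gcongr
  linarith

end
end

section
/- Let N ≥ 3, let V satisfy condition (V) and the decay condition that there exist A, α > 0 with V⁺(x) ≤ A|x|^{-2-α} for all x ∈ ℝ^N, let f satisfy conditions (f1), (f2), (f3), let λ > 0, and let u be a solution of problem (P_λ). Then ∫_{ℝ^N} |∇u|² dx ≥ Λ ∫_{ℝ^N} V(x)u² dx. -/
open MeasureTheory Filter Metric Set
open scoped ENNReal NNReal Topology

noncomputable section

def admSet (N : ℕ) (V : Euc N → ℝ) (R : ℝ) : Set ℝ :=
  { t : ℝ | ∃ u : Euc N → ℝ, ContDiff ℝ (⊤ : ℕ∞) u ∧ HasCompactSupport u ∧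
    tsupport u ⊆ ball (0 : Euc N) R ∧
    (∫ x, V x * u x ^ 2) = 1 ∧ t = ∫ x, ‖gradient u x‖ ^ 2 }

lemma lam1_eq (N : ℕ) (V : Euc N → ℝ) (R : ℝ) : lam1 N V R = sInf (admSet N V R) := rfl

lemma admSet_mono (N : ℕ) (V : Euc N → ℝ) {R R' : ℝ} (h : R ≤ R') :
    admSet N V R ⊆ admSet N V R' := by
  rintro t ⟨u, h1, h2, h3, h4, h5⟩
  exact ⟨u, h1, h2, h3.trans (ball_subset_ball h), h4, h5⟩

lemma admSet_nonneg (N : ℕ) (V : Euc N → ℝ) (R : ℝ) : ∀ t ∈ admSet N V R, 0 ≤ t := by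
  rintro t ⟨u, h1, h2, h3, h4, rfl⟩
  positivity

lemma lam1_nonneg (N : ℕ) (V : Euc N → ℝ) (R : ℝ) : 0 ≤ lam1 N V R :=
  Real.sInf_nonneg (admSet_nonneg N V R)

lemma lam1_tendsto (N : ℕ) (V : Euc N → ℝ) : Tendsto (lam1 N V) atTop (𝓝 (Lam N V)) := by
  suffices h : ∃ L, Tendsto (lam1 N V) atTop (𝓝 L) from tendsto_nhds_limUnder h
  by_cases hne : ∃ R, (admSet N V R).Nonempty
  · obtain ⟨R0, hR0⟩ := hne
    have hanti : Antitone (fun R => lam1 N V (max R R0)) := by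
      intro R R' h
      refine csInf_le_csInf ⟨0, fun t ht => admSet_nonneg N V _ t ht⟩ ?_ ?_
      · exact hR0.mono (admSet_mono N V (le_max_right _ _))
      · exact admSet_mono N V (max_le_max h le_rfl)
    refine ⟨_, (tendsto_atTop_ciInf hanti ⟨0, ?_⟩).congr' ?_⟩
    · rintro _ ⟨R, rfl⟩
      exact lam1_nonneg N V _
    · filter_upwards [eventually_ge_atTop R0] with R hR
      rw [max_eq_left hR]
  · refine ⟨0, tendsto_const_nhds.congr fun R => ?_⟩
    rw [lam1_eq, Set.not_nonempty_iff_eq_empty.1 fun h => hne ⟨R, h⟩, Real.sInf_empty]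

lemma Lam_nonneg (N : ℕ) (V : Euc N → ℝ) : 0 ≤ Lam N V :=
  ge_of_tendsto' (lam1_tendsto N V) (lam1_nonneg N V)

lemma norm_gradient (N : ℕ) (u : Euc N → ℝ) (x : Euc N) : ‖gradient u x‖ = ‖fderiv ℝ u x‖ := by
  rw [gradient, LinearIsometryEquiv.norm_map]

lemma Lam_le_smooth (N : ℕ) (V : Euc N → ℝ) (φ : Euc N → ℝ) (h1 : ContDiff ℝ (⊤ : ℕ∞) φ)
    (h2 : HasCompactSupport φ) :
    Lam N V * ∫ x, V x * φ x ^ 2 ≤ ∫ x, ‖fderiv ℝ φ x‖ ^ 2 := by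
  rcases le_or_gt (∫ x, V x * φ x ^ 2) 0 with hc | hc
  · exact (mul_nonpos_of_nonneg_of_nonpos (Lam_nonneg N V) hc).trans (by positivity)
  obtain ⟨c, hcdef⟩ : ∃ c, c = ∫ x, V x * φ x ^ 2 := ⟨_, rfl⟩
  rw [← hcdef] at hc ⊢
  rw [← le_div_iff₀ hc]
  have hs : 0 < √c := Real.sqrt_pos.2 hc
  obtain ⟨R0, hR0⟩ := h2.isCompact.isBounded.subset_ball (0 : Euc N)
  refine le_of_tendsto (lam1_tendsto N V) ?_
  filter_upwards [eventually_ge_atTop R0] with R hR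
  rw [lam1_eq]
  refine csInf_le ⟨0, fun t ht => admSet_nonneg N V R t ht⟩ ?_
  have hsub : Function.support (fun x => (√c)⁻¹ • φ x) ⊆ Function.support φ :=
    fun x hx h0 => hx (by simp only [h0, smul_zero])
  have hsc : HasCompactSupport (fun x => (√c)⁻¹ • φ x) := h2.mono hsub
  refine ⟨fun x => (√c)⁻¹ • φ x, h1.const_smul _, hsc, ?_, ?_, ?_⟩
  · refine subset_trans ?_ (hR0.trans (ball_subset_ball hR))
    exact closure_mono hsub
  · have : ∀ x, V x * ((√c)⁻¹ • φ x) ^ 2 = c⁻¹ * (V x * φ x ^ 2) := by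
      intro x
      rw [smul_eq_mul, mul_pow, inv_pow, Real.sq_sqrt hc.le]; ring
    simp_rw [this]
    rw [integral_const_mul, ← hcdef, inv_mul_cancel₀ hc.ne']
  · have : ∀ x, ‖gradient (fun x => (√c)⁻¹ • φ x) x‖ ^ 2 = c⁻¹ * ‖fderiv ℝ φ x‖ ^ 2 := by
      intro x
      rw [norm_gradient, fderiv_fun_const_smul (h1.differentiable (by simp) x), norm_smul, mul_pow,
        norm_inv, Real.norm_of_nonneg hs.le, inv_pow, Real.sq_sqrt hc.le]
    simp_rw [this]
    rw [integral_const_mul, div_eq_inv_mul]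

section conv
variable {N : ℕ} {F : Type*} [NormedAddCommGroup F] [NormedSpace ℝ F] [CompleteSpace F]

open scoped Convolution
open ContinuousLinearMap

lemma conv_zero (ρ : ContDiffBump (0 : Euc N)) (hρ : ρ.rOut ≤ 1) (g : Euc N → F) (R : ℝ)
    (hg : ∀ x ∉ closedBall (0 : Euc N) R, g x = 0) (x : Euc N)
    (hx : x ∉ closedBall (0 : Euc N) (R + 1)) :
    (ρ.normed volume ⋆[lsmul ℝ ℝ, volume] g) x = 0 := by
  by_contra hne
  obtain ⟨a, ha, b, hb, rfl⟩ := support_convolution_subset_swap _ (Function.mem_support.2 hne)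
  rw [ρ.support_normed_eq] at hb
  have ha' : ‖a‖ ≤ R := by
    by_contra h
    exact ha (hg a (by simpa using h))
  apply hx
  simp only [mem_ball_zero_iff, mem_closedBall_zero_iff] at *
  linarith [norm_add_le a b]

lemma conv_bound (ρ : ContDiffBump (0 : Euc N)) (g : Euc N → F) (hgc : Continuous g) (C : ℝ)
    (hC : ∀ x, ‖g x‖ ≤ C) (x : Euc N) :
    ‖(ρ.normed volume ⋆[lsmul ℝ ℝ, volume] g) x‖ ≤ C := by
  rw [← dist_zero_right]
  refine dist_convolution_le ((norm_nonneg _).trans (hC 0)) ρ.support_normed_eq.subset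
    ρ.nonneg_normed ρ.integral_normed hgc.aestronglyMeasurable ?_
  intro y _
  simpa using hC y

lemma tendsto_int_conv (V : Euc N → ℝ) (hV : Continuous V) (g : Euc N → F) (hgc : Continuous g)
    (hgs : HasCompactSupport g) (ρ : ℕ → ContDiffBump (0 : Euc N))
    (hρ : ∀ n, (ρ n).rOut ≤ 1) (hρ0 : Tendsto (fun n => (ρ n).rOut) atTop (𝓝 0)) :
    Tendsto (fun n => ∫ x, V x * ‖((ρ n).normed volume ⋆[lsmul ℝ ℝ, volume] g) x‖ ^ 2) atTop
      (𝓝 (∫ x, V x * ‖g x‖ ^ 2)) := by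
  obtain ⟨R, hR⟩ := hgs.isCompact.isBounded.subset_closedBall (0 : Euc N)
  obtain ⟨C, hC⟩ := hgs.exists_bound_of_continuous hgc
  have hg0 : ∀ x ∉ closedBall (0 : Euc N) R, g x = 0 := fun x hx =>
    image_eq_zero_of_notMem_tsupport fun h => hx (hR h)
  refine tendsto_integral_of_dominated_convergence
    ((closedBall (0 : Euc N) (R + 1)).indicator fun x => |V x| * C ^ 2) ?_ ?_ ?_ ?_
  · intro n
    refine (hV.mul (Continuous.pow (Continuous.norm ?_) 2)).aestronglyMeasurable
    exact (ρ n).hasCompactSupport_normed.continuous_convolution_left _ (ρ n).continuous_normed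
      hgc.locallyIntegrable
  · rw [integrable_indicator_iff measurableSet_closedBall]
    exact (hV.abs.mul continuous_const).continuousOn.integrableOn_compact
      (isCompact_closedBall _ _)
  · intro n
    refine Eventually.of_forall fun x => ?_
    by_cases hx : x ∈ closedBall (0 : Euc N) (R + 1)
    · rw [indicator_of_mem hx, norm_mul, Real.norm_eq_abs, norm_pow, norm_norm]
      have := conv_bound (ρ n) g hgc C hC x
      gcongr
    · rw [indicator_of_notMem hx, conv_zero (ρ n) (hρ n) g R hg0 x hx]
      simp
  · refine Eventually.of_forall fun x => ?_
    exact ((ContDiffBump.convolution_tendsto_right_of_continuous hρ0 hgc x).norm.pow 2).const_mul _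

lemma Lam_le_C1 (V : Euc N → ℝ) (hV : Continuous V) (φ : Euc N → ℝ) (h1 : ContDiff ℝ 1 φ)
    (h2 : HasCompactSupport φ) :
    Lam N V * ∫ x, V x * φ x ^ 2 ≤ ∫ x, ‖fderiv ℝ φ x‖ ^ 2 := by
  let ρ : ℕ → ContDiffBump (0 : Euc N) := fun n =>
    ⟨1 / (n + 1) / 2, 1 / (n + 1), by positivity, half_lt_self (by positivity)⟩
  have hρ : ∀ n, (ρ n).rOut ≤ 1 := fun n => by
    change (1 : ℝ) / (n + 1) ≤ 1
    rw [div_le_one (by positivity)]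
    linarith [(Nat.cast_nonneg n : (0 : ℝ) ≤ n)]
  have hρ0 : Tendsto (fun n => (ρ n).rOut) atTop (𝓝 0) := tendsto_one_div_add_atTop_nhds_zero_nat
  have t1 := tendsto_int_conv V hV φ h1.continuous h2 ρ hρ hρ0
  have t2 := tendsto_int_conv (fun _ => 1) continuous_const (fderiv ℝ φ)
    (h1.continuous_fderiv (by simp)) (h2.fderiv (𝕜 := ℝ)) ρ hρ hρ0
  simp only [one_mul, Real.norm_eq_abs, sq_abs] at t1 t2
  refine le_of_tendsto_of_tendsto' (t1.const_mul _) t2 fun n => ?_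
  have := Lam_le_smooth N V ((ρ n).normed volume ⋆[lsmul ℝ ℝ, volume] φ)
    ((ρ n).hasCompactSupport_normed.contDiff_convolution_left _ (ρ n).contDiff_normed
      h1.continuous.locallyIntegrable) ((ρ n).hasCompactSupport_normed.convolution _ h2)
  refine this.trans_eq (integral_congr_ae (Eventually.of_forall fun x => ?_))
  have hd := (h2.hasFDerivAt_convolution_right (lsmul ℝ ℝ)
    ((ρ n).continuous_normed (μ := volume)).locallyIntegrable h1 x (μ := volume)).fderiv
  have hL : (lsmul ℝ ℝ : ℝ →L[ℝ] ℝ →L[ℝ] ℝ).precompR (Euc N)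
      = (lsmul ℝ ℝ : ℝ →L[ℝ] (Euc N →L[ℝ] ℝ) →L[ℝ] (Euc N →L[ℝ] ℝ)) := by
    ext; simp
  simp only
  rw [hd, hL]

end conv

def cutS (n : ℕ) (t : ℝ) : ℝ := max 0 (min 1 ((n + 1) * t - 1))

def cutH (n : ℕ) (t : ℝ) : ℝ := ∫ s in (0 : ℝ)..t, cutS n s

lemma cutS_cont (n : ℕ) : Continuous (cutS n) := by unfold cutS; fun_prop
lemma cutS_nonneg (n : ℕ) (t : ℝ) : 0 ≤ cutS n t := le_max_left _ _
lemma cutS_le (n : ℕ) (t : ℝ) : cutS n t ≤ 1 := max_le zero_le_one (min_le_left _ _)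
lemma cutS_zero (n : ℕ) (t : ℝ) (h : (n + 1) * t ≤ 1) : cutS n t = 0 :=
  max_eq_left ((min_le_right _ _).trans (by linarith))
lemma cutS_tendsto (t : ℝ) (ht : 0 < t) : Tendsto (fun n => cutS n t) atTop (𝓝 1) := by
  refine tendsto_const_nhds.congr' ?_
  obtain ⟨m, hm⟩ := exists_nat_gt (2 / t)
  filter_upwards [eventually_ge_atTop m] with n hn
  have h1 : (m : ℝ) ≤ n := by exact_mod_cast hn
  rw [div_lt_iff₀ ht] at hm
  have : (m : ℝ) * t ≤ n * t := by gcongr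
  unfold cutS
  rw [min_eq_left (by nlinarith), max_eq_right zero_le_one]

lemma cutH_deriv (n : ℕ) (t : ℝ) : HasDerivAt (cutH n) (cutS n t) t :=
  intervalIntegral.integral_hasDerivAt_right ((cutS_cont n).intervalIntegrable _ _)
    ((cutS_cont n).stronglyMeasurableAtFilter _ _) (cutS_cont n).continuousAt

lemma cutH_C1 (n : ℕ) : ContDiff ℝ 1 (cutH n) := by
  rw [contDiff_one_iff_deriv]
  refine ⟨fun t => (cutH_deriv n t).differentiableAt, ?_⟩
  rw [funext fun t => (cutH_deriv n t).deriv]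
  exact cutS_cont n

lemma cutH_nonneg (n : ℕ) (t : ℝ) (ht : 0 ≤ t) : 0 ≤ cutH n t :=
  intervalIntegral.integral_nonneg ht fun s _ => cutS_nonneg n s

lemma cutH_le (n : ℕ) (t : ℝ) (ht : 0 ≤ t) : cutH n t ≤ t := by
  have := intervalIntegral.integral_mono_on ht ((cutS_cont n).intervalIntegrable (μ := volume) 0 t)
    (intervalIntegrable_const (c := (1 : ℝ))) fun s _ => cutS_le n s
  simpa [cutH] using this

lemma cutH_zero (n : ℕ) (t : ℝ) (ht : 0 ≤ t) (h : (n + 1) * t ≤ 1) : cutH n t = 0 := by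
  unfold cutH
  refine (intervalIntegral.integral_congr (g := fun _ => (0 : ℝ)) fun s hs => ?_).trans (by simp)
  rw [uIcc_of_le ht] at hs
  refine cutS_zero n s (le_trans ?_ h)
  have := hs.2
  gcongr

lemma cutH_tendsto (t : ℝ) (ht : 0 ≤ t) : Tendsto (fun n => cutH n t) atTop (𝓝 t) := by
  have : Tendsto (fun n => cutH n t) atTop (𝓝 (∫ _ in (0 : ℝ)..t, (1 : ℝ))) := by
    refine intervalIntegral.tendsto_integral_filter_of_dominated_convergence (fun _ => 1)
      ?_ ?_ ?_ ?_
    · exact Eventually.of_forall fun n => (cutS_cont n).aestronglyMeasurable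
    · refine Eventually.of_forall fun n => Eventually.of_forall fun s _ => ?_
      rw [Real.norm_of_nonneg (cutS_nonneg n s)]; exact cutS_le n s
    · exact intervalIntegrable_const
    · refine Eventually.of_forall fun s hs => ?_
      rw [uIoc_of_le ht] at hs
      exact cutS_tendsto s hs.1
  simpa using this

lemma grad_sq (N : ℕ) (u : Euc N → ℝ) (x : Euc N) :
    ‖gradient u x‖ ^ 2 = ∑ i, (fderiv ℝ u x (EuclideanSpace.single i 1)) ^ 2 := by
  rw [EuclideanSpace.real_norm_sq_eq]
  refine Finset.sum_congr rfl fun i _ => ?_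
  congr 1
  rw [← toDual_gradient (𝕜 := ℝ), InnerProductSpace.toDual_apply_apply,
    EuclideanSpace.inner_single_right]
  simp

/-- Integration by parts against `H ∘ u`. -/
lemma ibp (N : ℕ) (u : Euc N → ℝ) (hu : ContDiff ℝ 2 u) (H S : ℝ → ℝ) (hH : ContDiff ℝ 1 H)
    (hS : ∀ t, HasDerivAt H (S t) t) (hc : HasCompactSupport (fun x => H (u x))) :
    ∫ x, S (u x) * ‖gradient u x‖ ^ 2 = ∫ x, H (u x) * (-lap N u x) := by
  have hu1 : ContDiff ℝ 1 u := hu.of_le (by norm_num)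
  have hψ : ContDiff ℝ 1 (fun x => H (u x)) := hH.comp hu1
  have hfd : ∀ x, fderiv ℝ (fun x => H (u x)) x = S (u x) • fderiv ℝ u x := fun x =>
    ((hS (u x)).comp_hasFDerivAt x (hu1.differentiable (by simp) x).hasFDerivAt).fderiv
  let e : Fin N → Euc N := fun i => EuclideanSpace.single i 1
  have hd : ∀ i, ContDiff ℝ 1 (fun y => fderiv ℝ u y (e i)) := fun i =>
    (hu.fderiv_right (m := 1) (by norm_num)).clm_apply contDiff_const
  have hA : ∀ i, Integrable (fun x => fderiv ℝ (fun x => H (u x)) x (e i) * fderiv ℝ u x (e i)) := by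
    intro i
    refine Continuous.integrable_of_hasCompactSupport
      (((hψ.continuous_fderiv (by simp)).clm_apply continuous_const).mul (hd i).continuous) ?_
    exact (hc.fderiv_apply (𝕜 := ℝ) (e i)).mul_right
  have hB : ∀ i, Integrable (fun x => H (u x) * fderiv ℝ (fun y => fderiv ℝ u y (e i)) x (e i)) := by
    intro i
    refine Continuous.integrable_of_hasCompactSupport (hψ.continuous.mul
      (((hd i).continuous_fderiv (by simp)).clm_apply continuous_const)) hc.mul_right
  have key : ∀ i, ∫ x, H (u x) * fderiv ℝ (fun y => fderiv ℝ u y (e i)) x (e i)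
      = -∫ x, fderiv ℝ (fun x => H (u x)) x (e i) * fderiv ℝ u x (e i) := by
    intro i
    refine integral_mul_fderiv_eq_neg_fderiv_mul_of_integrable (hA i) (hB i) ?_ ?_ ?_
    · exact Continuous.integrable_of_hasCompactSupport (hψ.continuous.mul (hd i).continuous)
        hc.mul_right
    · exact fun x _ => hψ.differentiable (by simp) x
    · exact fun x _ => (hd i).differentiable (by simp) x
  have e1 : ∀ x, S (u x) * ‖gradient u x‖ ^ 2
      = ∑ i, fderiv ℝ (fun x => H (u x)) x (e i) * fderiv ℝ u x (e i) := by
    intro x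
    rw [grad_sq, Finset.mul_sum]
    refine Finset.sum_congr rfl fun i _ => ?_
    rw [hfd]
    simp only [smul_apply, smul_eq_mul, e]
    ring
  have e2 : ∀ x, H (u x) * (-lap N u x)
      = -∑ i, H (u x) * fderiv ℝ (fun y => fderiv ℝ u y (e i)) x (e i) := by
    intro x
    rw [lap, mul_neg, Finset.mul_sum]
  simp_rw [e1, e2]
  rw [integral_neg, integral_finsetSum _ fun i _ => hA i, integral_finsetSum _ fun i _ => hB i]
  simp_rw [key]
  simp

/-- for any solution `u` of `(P_λ)`, `∫ |∇u|² ≥ Λ ∫ V u²`. -/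
theorem stmt16 (N : ℕ) (hN : 3 ≤ N) (V V₁ V₂ : Euc N → ℝ)
    (hV : CondV N V V₁ V₂) (hdec : CondVDecay N V)
    (f : ℝ → ℝ) (hf : CondF N V f)
    (lam : ℝ) (hlam : 0 < lam)
    (u : Euc N → ℝ) (hu : IsSolution N V f lam u) :
    Lam N V * ∫ x : Euc N, V x * u x ^ 2 ≤ ∫ x : Euc N, ‖gradient u x‖ ^ 2 := by
  obtain ⟨⟨C, β, hβ, -, hhol⟩, -⟩ := hV
  have hVc : Continuous V := hhol.continuous hβ
  have hf0 : ∀ t, 0 ≤ t → 0 ≤ f t := hf.2.1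
  have hu1 : ContDiff ℝ 1 u := hu.smooth.of_le (by norm_num)
  have huc : Continuous u := hu1.continuous
  have hcs : ∀ n, HasCompactSupport (fun x => cutH n (u x)) := by
    intro n
    have hev : ∀ᶠ x in cocompact (Euc N), u x < 1 / ((n : ℝ) + 1) :=
      hu.decay.eventually_lt_const (by positivity)
    obtain ⟨K, hK, hKs⟩ := mem_cocompact.1 hev
    refine HasCompactSupport.intro hK fun x hx => cutH_zero n _ (hu.pos x).le ?_
    have h := hKs hx
    simp only [mem_ofPred_eq] at h
    rw [lt_div_iff₀ (by positivity)] at h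
    linarith
  have hC1 : ∀ n, ContDiff ℝ 1 (fun x => cutH n (u x)) := fun n => (cutH_C1 n).comp hu1
  by_cases hint : Integrable (fun x => V x * u x ^ 2)
  swap
  · rw [integral_undef hint, mul_zero]
    positivity
  have hgc : Continuous (fun x => ‖gradient u x‖ ^ 2) := by
    simp_rw [norm_gradient]
    exact (hu1.continuous_fderiv (by simp)).norm.pow 2
  -- energy bound
  have hbd : ∀ n, ∫ x, cutS n (u x) * ‖gradient u x‖ ^ 2 ≤ lam * ∫ x, |V x * u x ^ 2| := by
    intro n
    rw [ibp N u hu.smooth (cutH n) (cutS n) (cutH_C1 n) (cutH_deriv n) (hcs n),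
      ← integral_const_mul]
    simp_rw [hu.eqn]
    refine integral_mono (Continuous.integrable_of_hasCompactSupport ?_ (hcs n).mul_right)
      (hint.abs.const_mul lam) ?_
    · have hfc : Continuous f := hf.1.continuous
      have := (hC1 n).continuous
      fun_prop
    · intro x
      have h0 := hu.pos x
      have h1 := cutH_nonneg n (u x) h0.le
      have h2 := cutH_le n (u x) h0.le
      have h3 := hf0 (u x) h0.le
      have h4 : V x * (u x * cutH n (u x)) ≤ |V x| * (u x * u x) := by
        refine (mul_le_mul_of_nonneg_right (le_abs_self _) (by positivity)).trans ?_
        gcongr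
      have h5 : |V x * u x ^ 2| = |V x| * (u x * u x) := by
        rw [abs_mul, abs_of_nonneg (sq_nonneg (u x)), sq]
      simp only
      rw [h5]
      calc cutH n (u x) * (lam * (V x * u x - f (u x)))
          = lam * (V x * (u x * cutH n (u x)) - cutH n (u x) * f (u x)) := by ring
        _ ≤ lam * (|V x| * (u x * u x)) := by
          have := mul_nonneg h1 h3
          gcongr
          linarith
  have hgi : Integrable (fun x => ‖gradient u x‖ ^ 2) := by
    refine ⟨hgc.aestronglyMeasurable, ?_⟩
    have hcont : ∀ n, Continuous (fun x => cutS n (u x) * ‖gradient u x‖ ^ 2) := fun n =>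
      ((cutS_cont n).comp huc).mul hgc
    have hnn : ∀ n x, 0 ≤ cutS n (u x) * ‖gradient u x‖ ^ 2 := fun n x =>
      mul_nonneg (cutS_nonneg _ _) (by positivity)
    have hlim : ∀ x, Tendsto (fun n => ‖cutS n (u x) * ‖gradient u x‖ ^ 2‖ₑ) atTop
        (𝓝 ‖‖gradient u x‖ ^ 2‖ₑ) := fun x => by
      have := ((cutS_tendsto (u x) (hu.pos x)).mul_const (‖gradient u x‖ ^ 2)).enorm
      rwa [one_mul] at this
    have hsupp : ∀ n, Integrable (fun x => cutS n (u x) * ‖gradient u x‖ ^ 2) := by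
      intro n
      refine (hcont n).integrable_of_hasCompactSupport (HasCompactSupport.mul_right ?_)
      have hev : ∀ᶠ x in cocompact (Euc N), u x < 1 / ((n : ℝ) + 1) :=
        hu.decay.eventually_lt_const (by positivity)
      obtain ⟨K, hK, hKs⟩ := mem_cocompact.1 hev
      refine HasCompactSupport.intro hK fun x hx => cutS_zero n _ ?_
      have h := hKs hx
      simp only [mem_ofPred_eq] at h
      rw [lt_div_iff₀ (by positivity)] at h
      linarith
    have hle : ∀ n, ∫⁻ x, ‖cutS n (u x) * ‖gradient u x‖ ^ 2‖ₑ
        ≤ ENNReal.ofReal (lam * ∫ x, |V x * u x ^ 2|) := fun n => by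
      rw [← ofReal_integral_norm_eq_lintegral_enorm (hsupp n)]
      simp_rw [Real.norm_of_nonneg (hnn n _)]
      exact ENNReal.ofReal_le_ofReal (hbd n)
    refine lt_of_le_of_lt ?_ (ENNReal.ofReal_lt_top (r := lam * ∫ x, |V x * u x ^ 2|))
    calc ∫⁻ x, ‖‖gradient u x‖ ^ 2‖ₑ
        = ∫⁻ x, liminf (fun n => ‖cutS n (u x) * ‖gradient u x‖ ^ 2‖ₑ) atTop :=
          lintegral_congr fun x => (hlim x).liminf_eq.symm
      _ ≤ liminf (fun n => ∫⁻ x, ‖cutS n (u x) * ‖gradient u x‖ ^ 2‖ₑ) atTop :=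
          lintegral_liminf_le fun n => (hcont n).enorm.measurable
      _ ≤ _ := liminf_le_of_le (by isBoundedDefault) fun b hb => by
          obtain ⟨n, hn⟩ := hb.exists
          exact hn.trans (hle n)
  have t1 : Tendsto (fun n => ∫ x, V x * cutH n (u x) ^ 2) atTop (𝓝 (∫ x, V x * u x ^ 2)) := by
    refine tendsto_integral_of_dominated_convergence (fun x => |V x * u x ^ 2|) ?_ hint.abs ?_ ?_
    · exact fun n => (hVc.mul ((hC1 n).continuous.pow 2)).aestronglyMeasurable
    · refine fun n => Eventually.of_forall fun x => ?_
      have h1 := cutH_nonneg n (u x) (hu.pos x).le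
      have h2 := cutH_le n (u x) (hu.pos x).le
      rw [Real.norm_eq_abs, abs_mul, abs_mul, abs_pow, abs_pow, abs_of_nonneg h1,
        abs_of_pos (hu.pos x)]
      gcongr
    · exact Eventually.of_forall fun x => ((cutH_tendsto (u x) (hu.pos x).le).pow 2).const_mul _
  refine le_of_tendsto (t1.const_mul _) (Eventually.of_forall fun n => ?_)
  refine (Lam_le_C1 V hVc _ (hC1 n) (hcs n)).trans ?_
  refine integral_mono_of_nonneg (Eventually.of_forall fun x => by positivity) hgi
    (Eventually.of_forall fun x => ?_)
  have hfd : fderiv ℝ (fun x => cutH n (u x)) x = cutS n (u x) • fderiv ℝ u x :=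
    ((cutH_deriv n (u x)).comp_hasFDerivAt x (hu1.differentiable (by simp) x).hasFDerivAt).fderiv
  simp only
  rw [hfd, norm_smul, Real.norm_of_nonneg (cutS_nonneg _ _), norm_gradient]
  exact pow_le_pow_left₀ (mul_nonneg (cutS_nonneg _ _) (norm_nonneg _))
    (mul_le_of_le_one_left (norm_nonneg _) (cutS_le _ _)) 2

end
end
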